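/- The largest eigenvalue of the common lines operator C is λ_max = 1/2, its eigenspace is 3-dimensional, and every other eigenvalue λ of C satisfies λ ≤ 1/12; in particular there is a spectral gap of 1/2 − 1/12 = 5/12 separating the maximal eigenvalue from the rest of the spectrum. -/

import Mathlib

noncomputable section

open MeasureTheory Submodule
open scoped RealInnerProductSpace

abbrev V : Type := EuclideanSpace ℝ (Fin 3)

abbrev S2 : Type := Metric.sphere (0 : V) 1

/-- The plane `x^⊥` orthogonal to a point `x` of the unit sphere. -/
def plane (x : S2) : Submodule ℝ V := (ℝ ∙ (x : V))ᗮ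

/-- The common line `x^⊥ ∩ y^⊥`. -/
def cline (x y : S2) : Submodule ℝ V := plane x ⊓ plane y

/-- The common-lines kernel `C(x,y) : V → V`: orthogonal projection onto the
line `x^⊥ ∩ y^⊥`.  Its restriction to `y^⊥` is the kernel of the paper: it sends
`v ∈ y^⊥` to the orthogonal projection of `v` onto `x^⊥ ∩ y^⊥`, viewed inside `x^⊥`
(projecting the ambient `V` first onto `y^⊥` does not change the result). -/
def Cker (x y : S2) : V →ₗ[ℝ] V :=
  (cline x y).subtype ∘ₗ (orthogonalProjection (cline x y)).toLinearMap

/-- The map on the sphere induced by a linear isometry of `V`. -/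
def sphereMap (g : V ≃ₗᵢ[ℝ] V) (x : S2) : S2 :=
  ⟨g x, by
    have := mem_sphere_zero_iff_norm.mp x.2
    simp [mem_sphere_zero_iff_norm, this]⟩

/-- The Hilbert space `H` of square integrable sections of the bundle of planes, realized as
the subspace of `L²` maps `s : S² → V` with `s x ∈ x^⊥` almost everywhere; it carries the
inner product `(s₁, s₂) = ∫ ⟪s₁ x, s₂ x⟫ dx` inherited from `L²`. -/
def Hsub (μ : Measure S2) : Submodule ℝ (Lp V 2 μ) where
  carrier := {f | ∀ᵐ x ∂μ, f x ∈ plane x}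
  add_mem' := by
    intro f g hf hg
    filter_upwards [hf, hg, Lp.coeFn_add f g] with x h1 h2 h3
    simp only [Pi.add_apply] at h3
    rw [h3]; exact add_mem h1 h2
  zero_mem' := by
    filter_upwards [Lp.coeFn_zero V 2 μ] with x h
    simp only [Pi.zero_apply] at h
    rw [h]; exact zero_mem _
  smul_mem' := by
    intro c f hf
    filter_upwards [hf, Lp.coeFn_smul c f] with x h1 h2
    simp only [Pi.smul_apply] at h2
    rw [h2]; exact smul_mem _ _ h1

/-!
Let `s` satisfy `C s = λ s`. As `C` is symmetric, pairing this equation with the zonal sections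
`⟪a, x⟫ ^ k • b` turns it into a relation between the vector moments `L (⟪a, ·⟫ ^ k)` of `s`.
Odd moments vanish for `λ ≠ 0`, because `C(x, -y) = C(x, y)`. For `k = 2 m`, invariance under the
rotations fixing `x` evaluates `∫ ⟪a, y⟫ ^ (2 m) C(x, y) b dy` as a combination of the projections
of `a` and `b` to `x^⊥`, with coefficients polynomial in `⟪a, x⟫ ^ 2`. For `m = 0` this says
`λ L 1 = L 1 / 2`. If the even moments up to degree `2 m` vanish, the moment of degree `2 m + 2`
satisfies
`(2 m + 3) (2 m + 4) λ ⟪b, L (⟪a, ·⟫ ^ (2 m + 2))⟫ =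
  2 ⟪a, L (⟪a, ·⟫ ^ (2 m + 1) ⟪b, ·⟫)⟫ - ⟪b, L (⟪a, ·⟫ ^ (2 m + 2))⟫`.
When `λ > 1 / 12`, so that the factor on the left exceeds `1`, taking `b = a` and then polarizing
makes this moment vanish too. The moments determine `s` by the Stone–Weierstrass theorem. Hence
`λ > 1 / 12` forces `λ = 1 / 2`, and then `s` is determined by the vector `∫ s`; conversely, the
projections of the fixed vectors of `V` to the planes `x^⊥` form a `3`-dimensional space of
eigensections for `1 / 2`.
-/

section Moments

variable {X E : Type*} [TopologicalSpace X] [CompactSpace X] [MeasurableSpace X]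
  [OpensMeasurableSpace X] [NormedAddCommGroup E] [NormedSpace ℝ E] {μ : Measure X} {s : X → E}

theorem integrable_continuousMap_smul (hs : Integrable s μ) (φ : C(X, ℝ)) :
    Integrable (fun x => φ x • s x) μ :=
  hs.bdd_smul ‖φ‖ φ.continuous.aestronglyMeasurable (.of_forall φ.norm_coe_le_norm)

/-- The vector measure `s • μ` of an integrable `s`, regarded as the functional `φ ↦ ∫ φ • s` on
continuous functions; its values on powers of coordinates are the moments of `s`. -/
def momentMap (hs : Integrable s μ) : C(X, ℝ) →L[ℝ] E :=
  LinearMap.mkContinuous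
    { toFun := fun φ => ∫ x, φ x • s x ∂μ
      map_add' := fun φ ψ => by
        simp only [ContinuousMap.add_apply, add_smul]
        exact integral_add (integrable_continuousMap_smul hs φ) (integrable_continuousMap_smul hs ψ)
      map_smul' := fun c φ => by
        simp only [ContinuousMap.smul_apply, smul_assoc, RingHom.id_apply, integral_smul] }
    (∫ x, ‖s x‖ ∂μ) fun φ => by
      rw [mul_comm, ← integral_const_mul]
      refine norm_integral_le_of_norm_le (hs.norm.const_mul _) (.of_forall fun x => ?_)
      rw [norm_smul]
      gcongr
      exact φ.norm_coe_le_norm x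

theorem momentMap_apply (hs : Integrable s μ) (φ : C(X, ℝ)) :
    momentMap hs φ = ∫ x, φ x • s x ∂μ := rfl

theorem momentMap_one (hs : Integrable s μ) : momentMap hs 1 = ∫ x, s x ∂μ := by
  simp only [momentMap_apply, ContinuousMap.one_apply, one_smul]

end Moments

section Density

variable {X F E : Type*} [TopologicalSpace X] [CompactSpace X] [AddCommGroup F] [Module ℝ F]
  [NormedAddCommGroup E] [NormedSpace ℝ E]

/-- The exponentials `exp (ℓ a)` of a linear family `ℓ` of continuous functions. They form a
multiplicative monoid, so that their linear span is an algebra, to which the Stone–Weierstrass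
theorem applies. -/
def expSubmonoid (ℓ : F →ₗ[ℝ] C(X, ℝ)) : Submonoid C(X, ℝ) where
  carrier := Set.range fun a => NormedSpace.exp (ℓ a)
  mul_mem' := by
    let := NormedAlgebra.restrictScalars ℚ ℝ C(X, ℝ)
    rintro _ _ ⟨a, rfl⟩ ⟨b, rfl⟩
    exact ⟨a + b, by simp only [map_add, NormedSpace.exp_add]⟩
  one_mem' := ⟨0, by simp only [map_zero, NormedSpace.exp_zero]⟩

theorem exp_continuousMap_apply (f : C(X, ℝ)) (x : X) :
    NormedSpace.exp f x = Real.exp (f x) := by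
  let := NormedAlgebra.restrictScalars ℚ ℝ C(X, ℝ)
  rw [Real.exp_eq_exp_ℝ]
  exact NormedSpace.map_exp (ContinuousMap.evalAlgHom ℝ ℝ x) (continuous_eval_const x) f

theorem span_expSubmonoid_dense {ℓ : F →ₗ[ℝ] C(X, ℝ)} (hℓ : ∀ x y, x ≠ y → ∃ a, ℓ a x ≠ ℓ a y) :
    (span ℝ (expSubmonoid ℓ : Set C(X, ℝ))).topologicalClosure = ⊤ := by
  have separates : (Algebra.adjoin ℝ (expSubmonoid ℓ : Set C(X, ℝ))).SeparatesPoints := by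
    intro x y hxy
    obtain ⟨a, ha⟩ := hℓ x y hxy
    refine ⟨_, ⟨_, Algebra.subset_adjoin ⟨a, rfl⟩, rfl⟩, ?_⟩
    simpa only [exp_continuousMap_apply, ne_eq, Real.exp_eq_exp] using ha
  have dense := ContinuousMap.subalgebra_topologicalClosure_eq_top_of_separatesPoints _ separates
  have span_eq := Algebra.adjoin_eq_span ℝ (expSubmonoid ℓ : Set C(X, ℝ))
  rw [Submonoid.closure_eq] at span_eq
  rw [← span_eq]
  exact congrArg Subalgebra.toSubmodule dense

theorem continuousLinearMap_eq_zero_of_pow_eq_zero {ℓ : F →ₗ[ℝ] C(X, ℝ)}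
    (hℓ : ∀ x y, x ≠ y → ∃ a, ℓ a x ≠ ℓ a y) (L : C(X, ℝ) →L[ℝ] E)
    (hL : ∀ a (k : ℕ), L (ℓ a ^ k) = 0) : L = 0 := by
  have apply_exp (a : F) : L (NormedSpace.exp (ℓ a)) = 0 := by
    have h := (NormedSpace.exp_series_hasSum_exp' (𝕂 := ℝ) (ℓ a)).mapL L
    simp only [map_smul, hL, smul_zero] at h
    exact h.unique hasSum_zero
  have span_le : span ℝ (expSubmonoid ℓ : Set C(X, ℝ)) ≤ L.ker := by
    rw [Submodule.span_le]
    rintro _ ⟨a, rfl⟩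
    exact apply_exp a
  have closure_le := topologicalClosure_minimal _ span_le L.isClosed_ker
  rw [span_expSubmonoid_dense hℓ] at closure_le
  exact ContinuousLinearMap.ext fun φ => closure_le (mem_top (x := φ))

end Density

open scoped Manifold ContDiff in
theorem ae_eq_zero_of_momentMap_eq_zero {B H M E : Type*} [NormedAddCommGroup B] [NormedSpace ℝ B]
    [FiniteDimensional ℝ B] [TopologicalSpace H] (I : ModelWithCorners ℝ B H) [TopologicalSpace M]
    [ChartedSpace H M] [IsManifold I ∞ M] [CompactSpace M] [T2Space M] [MeasurableSpace M]
    [BorelSpace M] [NormedAddCommGroup E] [NormedSpace ℝ E] [CompleteSpace E] {μ : Measure M}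
    {s : M → E} (hs : Integrable s μ) (h : momentMap hs = 0) : ∀ᵐ x ∂μ, s x = 0 :=
  ae_eq_zero_of_integral_contMDiff_smul_eq_zero I hs.locallyIntegrable fun φ hφ _ =>
    DFunLike.congr_fun h (⟨φ, hφ.continuous⟩ : C(M, ℝ))

/-- The linear function `x ↦ ⟪a, x⟫` on the sphere. -/
def coord : V →ₗ[ℝ] C(S2, ℝ) where
  toFun a := ⟨fun x => ⟪a, (x : V)⟫, by fun_prop⟩
  map_add' a b := by ext x; exact inner_add_left a b (x : V)
  map_smul' c a := by ext x; exact real_inner_smul_left a (x : V) c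

theorem coord_apply (a : V) (x : S2) : coord a x = ⟪a, (x : V)⟫ := rfl

theorem hasDerivAt_map_coord_pow {E : Type*} [NormedAddCommGroup E] [NormedSpace ℝ E]
    (Λ : C(S2, ℝ) →L[ℝ] E) {γ : ℝ → V} {γ' : V} {t : ℝ} (hγ : HasDerivAt γ γ' t) (k : ℕ) :
    HasDerivAt (fun t => Λ (coord (γ t) ^ k)) (k • Λ (coord (γ t) ^ (k - 1) * coord γ')) t := by
  have hasDerivAt_coord : HasDerivAt (fun t => coord (γ t)) (coord γ') t :=
    coord.toContinuousLinearMap.hasFDerivAt.comp_hasDerivAt t hγ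
  refine (Λ.hasFDerivAt.comp_hasDerivAt t (hasDerivAt_coord.fun_pow k)).congr_deriv ?_
  rw [← map_nsmul, nsmul_eq_mul, mul_assoc]

theorem coord_separates (x y : S2) (hxy : x ≠ y) : ∃ a, coord a x ≠ coord a y := by
  by_contra! h
  exact hxy (Subtype.ext (ext_inner_left ℝ h))

theorem ae_eq_zero_of_moments_eq_zero {E : Type*} [NormedAddCommGroup E] [NormedSpace ℝ E]
    [CompleteSpace E] {μ : Measure S2} {s : S2 → E} (hs : Integrable s μ)
    (h : ∀ a (k : ℕ), momentMap hs (coord a ^ k) = 0) : ∀ᵐ x ∂μ, s x = 0 :=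
  have : Fact (Module.finrank ℝ V = 2 + 1) := ⟨finrank_euclideanSpace_fin⟩
  ae_eq_zero_of_momentMap_eq_zero (modelWithCornersSelf ℝ (EuclideanSpace ℝ (Fin 2))) hs
    (continuousLinearMap_eq_zero_of_pow_eq_zero coord_separates _ h)

theorem measurableEmbedding_sphereMap (g : V ≃ₗᵢ[ℝ] V) : MeasurableEmbedding (sphereMap g) := by
  have continuous_sphereMap : Continuous (sphereMap g) :=
    Continuous.subtype_mk (g.continuous.comp continuous_subtype_val) _
  exact continuous_sphereMap.measurableEmbedding fun x y h =>
    Subtype.ext (g.injective (congrArg Subtype.val h))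

theorem exists_sphereMap_eq (x y : S2) : ∃ g, sphereMap g x = y :=
  ⟨(ℝ ∙ ((x : V) - y))ᗮ.reflection,
    Subtype.ext (reflection_sub ((norm_eq_of_mem_sphere x).trans (norm_eq_of_mem_sphere y).symm))⟩

instance : Infinite S2 := by
  have rank_gt_one : 1 < Module.rank ℝ V := by
    rw [← Module.finrank_eq_rank, finrank_euclideanSpace_fin]
    norm_num
  have nontrivial : (Metric.sphere (0 : V) 1).Nontrivial := by
    refine ⟨EuclideanSpace.single 0 1, by simp, EuclideanSpace.single 1 1, by simp, fun h => ?_⟩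
    simpa using congrArg (fun v : V => v 0) h
  exact ((isPreconnected_sphere rank_gt_one 0 1).infinite_of_nontrivial nontrivial).to_subtype

theorem exists_frame_coe_eq {v : Fin 3 → V} (hv : Orthonormal ℝ v) :
    ∃ B : OrthonormalBasis (Fin 3) ℝ V, ⇑B = v := by
  obtain ⟨B, hB⟩ := (hv.comp _ Subtype.val_injective).exists_orthonormalBasis_extension_of_card_eq
    (s := Set.univ) finrank_euclideanSpace_fin
  exact ⟨B, funext fun i => hB i trivial⟩

theorem exists_frame_rotate (B : OrthonormalBasis (Fin 3) ℝ V) (θ : ℝ) :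
    ∃ B' : OrthonormalBasis (Fin 3) ℝ V,
      ⇑B' = ![B 0, Real.cos θ • B 1 - Real.sin θ • B 2, Real.sin θ • B 1 + Real.cos θ • B 2] := by
  refine exists_frame_coe_eq (orthonormal_iff_ite.mpr fun i j => ?_)
  fin_cases i <;> fin_cases j <;>
    simp [-inner_self_eq_norm_sq_to_K, B.inner_eq_ite, inner_add_left, inner_add_right,
      inner_sub_left, inner_sub_right, real_inner_smul_left, real_inner_smul_right] <;>
    grind [Real.sin_sq_add_cos_sq θ]

theorem exists_frame_reflect (B : OrthonormalBasis (Fin 3) ℝ V) :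
    ∃ B' : OrthonormalBasis (Fin 3) ℝ V, ⇑B' = ![B 0, B 1, -B 2] := by
  refine exists_frame_coe_eq (orthonormal_iff_ite.mpr fun i j => ?_)
  fin_cases i <;> fin_cases j <;> simp [B.inner_eq_ite]

theorem exists_frame_adapted (x : S2) (a : V) : ∃ (B : OrthonormalBasis (Fin 3) ℝ V) (r : ℝ),
    B 0 = x ∧ a = ⟪(x : V), a⟫ • (x : V) + r • B 1 := by
  let f : Fin 3 → V := ![(x : V), a, 0]
  have finrank_eq : Module.finrank ℝ V = Fintype.card (Fin 3) := finrank_euclideanSpace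
  let B := InnerProductSpace.gramSchmidtOrthonormalBasis finrank_eq f
  have inner_B2 : ⟪B 2, a⟫ = 0 :=
    InnerProductSpace.gramSchmidtOrthonormalBasis_inv_triangular finrank_eq f
      (show (1 : Fin 3) < 2 by decide)
  have gramSchmidt_first : InnerProductSpace.gramSchmidt ℝ f 0 = x :=
    InnerProductSpace.gramSchmidt_bot ℝ f
  have normed_zero : InnerProductSpace.gramSchmidtNormed ℝ f 0 = x := by
    simp [InnerProductSpace.gramSchmidtNormed, gramSchmidt_first]
  have B0 : B 0 = x := by
    rw [InnerProductSpace.gramSchmidtOrthonormalBasis_apply, normed_zero]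
    rw [normed_zero]
    exact ne_zero_of_mem_unit_sphere x
  refine ⟨B, ⟪B 1, a⟫, B0, ?_⟩
  conv_lhs => rw [← B.sum_repr' a, Fin.sum_univ_three, inner_B2, zero_smul, add_zero, B0]

/-- Invariance of a measure on the sphere under all linear isometries of the ambient space; a
probability measure with this property is the uniform one. -/
def IsometryInvariant (μ : Measure S2) : Prop :=
  ∀ g : V ≃ₗᵢ[ℝ] V, MeasurePreserving (sphereMap g) μ μ

namespace IsometryInvariant

variable {μ : Measure S2}

theorem integral_comp {E : Type*} [NormedAddCommGroup E] [NormedSpace ℝ E]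
    (hμ : IsometryInvariant μ) (g : V ≃ₗᵢ[ℝ] V) (F : S2 → E) :
    ∫ y, F (sphereMap g y) ∂μ = ∫ y, F y ∂μ :=
  (hμ g).integral_comp (measurableEmbedding_sphereMap g) F

theorem integral_comp_frame {E : Type*} [NormedAddCommGroup E] [NormedSpace ℝ E]
    (hμ : IsometryInvariant μ) (B B' : OrthonormalBasis (Fin 3) ℝ V) (F : (Fin 3 → ℝ) → E) :
    ∫ y : S2, F (fun i => ⟪B' i, (y : V)⟫) ∂μ = ∫ y : S2, F (fun i => ⟪B i, (y : V)⟫) ∂μ := by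
  rw [← hμ.integral_comp (B.repr.trans B'.repr.symm)]
  refine integral_congr_ae (.of_forall fun y => congrArg F (funext fun i => ?_))
  simp [sphereMap, ← OrthonormalBasis.repr_apply_apply]

theorem integral_eq_zero_of_odd {E : Type*} [NormedAddCommGroup E] [NormedSpace ℝ E]
    (hμ : IsometryInvariant μ) {F : S2 → E} (hF : ∀ x, F (-x) = -F x) : ∫ x, F x ∂μ = 0 := by
  have antipodal := hμ.integral_comp (.neg ℝ) F
  have sphereMap_neg (x : S2) : sphereMap (.neg ℝ) x = -x := rfl
  simp only [sphereMap_neg, hF, integral_neg] at antipodal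
  have := IsAddTorsionFree.of_isTorsionFree ℝ E
  exact self_eq_neg.mp antipodal.symm

theorem nullSingletonClass [IsFiniteMeasure μ] (hμ : IsometryInvariant μ) :
    NullSingletonClass μ where
  measure_singleton x := by
    have measure_singleton_eq (y : S2) : μ {y} = μ {x} := by
      obtain ⟨g, rfl⟩ := exists_sphereMap_eq x y
      have := measurableEmbedding_sphereMap g
      rw [← (hμ g).measure_preimage_emb this, ← Set.image_singleton,
        Set.preimage_image_eq _ this.injective]
    by_contra hx
    exact measure_ne_top μ Set.univ (Set.infinite_univ.meas_eq_top
      ⟨μ {x}, hx, fun y _ => (measure_singleton_eq y).ge⟩)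

theorem ae_inner_sq_ne [IsFiniteMeasure μ] (hμ : IsometryInvariant μ) {a : V} (ha : a ≠ 0) :
    ∀ᵐ x : S2 ∂μ, ⟪a, (x : V)⟫ ^ 2 ≠ ‖a‖ ^ 2 := by
  have := hμ.nullSingletonClass
  have eq_inv_norm_smul {v : V} (hv : ‖v‖ = 1) (h : ⟪a, v⟫ = ‖a‖) : v = ‖a‖⁻¹ • a := by
    rw [← mul_one ‖a‖, ← hv, inner_eq_norm_mul_iff_real, hv, one_smul] at h
    rw [h, norm_smul, norm_norm, hv, mul_one, inv_smul_smul₀ (norm_ne_zero_iff.mpr ha)]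
  let poles : Set S2 := {x | ⟪a, (x : V)⟫ ^ 2 = ‖a‖ ^ 2}
  have poles_finite : poles.Finite := by
    refine Set.Finite.of_finite_image (f := Subtype.val) (Set.Finite.subset
      (Set.toFinite {‖a‖⁻¹ • a, -(‖a‖⁻¹ • a)}) ?_) Subtype.val_injective.injOn
    rintro _ ⟨x, hx, rfl⟩
    rcases sq_eq_sq_iff_eq_or_eq_neg.mp hx with h | h
    · exact .inl (eq_inv_norm_smul (norm_eq_of_mem_sphere x) h)
    · refine .inr (neg_eq_iff_eq_neg.mp (eq_inv_norm_smul ?_ ?_))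
      · rw [norm_neg, norm_eq_of_mem_sphere]
      · rw [inner_neg_right, h, neg_neg]
  exact measure_mono_null (fun x hx => not_not.mp hx) (poles_finite.measure_zero μ)

end IsometryInvariant

section Azimuthal

variable (B : OrthonormalBasis (Fin 3) ℝ V) (ω : ℝ → ℝ)

/-- The function `ρ² ω cos 2φ` in the cylindrical coordinates `(ρ cos φ, ρ sin φ)` around the axis
`B 0`, where `ω` depends on the height only. -/
def cosWeight (y : S2) : ℝ := (⟪B 1, (y : V)⟫ ^ 2 - ⟪B 2, (y : V)⟫ ^ 2) * ω ⟪B 0, (y : V)⟫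

/-- The function `ρ² ω sin 2φ` in the cylindrical coordinates `(ρ cos φ, ρ sin φ)` around the axis
`B 0`, where `ω` depends on the height only. -/
def sinWeight (y : S2) : ℝ := 2 * ⟪B 1, (y : V)⟫ * ⟪B 2, (y : V)⟫ * ω ⟪B 0, (y : V)⟫

variable {B ω} {μ : Measure S2}

theorem IsometryInvariant.momentMap_rotate (hμ : IsometryInvariant μ)
    (hc : Integrable (cosWeight B ω) μ) (hs : Integrable (sinWeight B ω) μ) (α r : ℝ) (k : ℕ)
    (θ : ℝ) :
    let f := coord (α • B 0 + r • (Real.cos θ • B 1 - Real.sin θ • B 2)) ^ k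
    Real.cos (2 * θ) • momentMap hs f + Real.sin (2 * θ) • momentMap hc f =
      momentMap hs (coord (α • B 0 + r • B 1) ^ k) := by
  intro f
  obtain ⟨B', hB'⟩ := exists_frame_rotate B θ
  have invariance := hμ.integral_comp_frame B B' fun v =>
    (α * v 0 + r * v 1) ^ k * (2 * v 1 * v 2 * ω (v 0))
  simp only [momentMap_apply, ← integral_smul]
  refine (integral_add ((integrable_continuousMap_smul hs f).smul (Real.cos (2 * θ)))
    ((integrable_continuousMap_smul hc f).smul (Real.sin (2 * θ)))).symm.trans ?_
  convert invariance using 3 with y y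
  · simp only [f, hB', Pi.smul_apply, cosWeight, sinWeight, coord_apply, ContinuousMap.pow_apply,
      smul_eq_mul, Matrix.cons_val, inner_add_left, inner_sub_left, real_inner_smul_left,
      Real.cos_two_mul', Real.sin_two_mul]
    ring
  · simp only [sinWeight, coord_apply, ContinuousMap.pow_apply, smul_eq_mul, inner_add_left,
      real_inner_smul_left]

theorem IsometryInvariant.two_mul_momentMap_cosWeight (hμ : IsometryInvariant μ)
    (hc : Integrable (cosWeight B ω) μ) (hs : Integrable (sinWeight B ω) μ) (α r : ℝ) (k : ℕ) :
    2 * momentMap hc (coord (α • B 0 + r • B 1) ^ k) =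
      k * r * momentMap hs (coord (α • B 0 + r • B 1) ^ (k - 1) * coord (B 2)) := by
  have hasDerivAt_rotated : HasDerivAt
      (fun θ : ℝ => α • B 0 + r • (Real.cos θ • B 1 - Real.sin θ • B 2)) (-r • B 2) 0 := by
    simpa using ((((Real.hasDerivAt_cos 0).smul_const (B 1)).sub
      ((Real.hasDerivAt_sin 0).smul_const (B 2))).const_smul r).const_add (α • B 0)
  have hasDerivAt_double : HasDerivAt (fun θ : ℝ => 2 * θ) 2 0 := by
    simpa using (hasDerivAt_id (0 : ℝ)).const_mul 2
  have hasDerivAt_sum := (hasDerivAt_double.cos.smul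
    (hasDerivAt_map_coord_pow (momentMap hs) hasDerivAt_rotated k)).add
    (hasDerivAt_double.sin.smul (hasDerivAt_map_coord_pow (momentMap hc) hasDerivAt_rotated k))
  have derivative_eq_zero := hasDerivAt_sum.unique
    ((hasDerivAt_const (0 : ℝ) (momentMap hs (coord (α • B 0 + r • B 1) ^ k))).congr_of_eventuallyEq
      (.of_forall (hμ.momentMap_rotate hc hs α r k)))
  simp only [map_smul, mul_smul_comm, nsmul_eq_mul, mul_zero, Real.cos_zero, Real.sin_zero,
    neg_zero, zero_mul, zero_smul, one_mul, one_smul, sub_zero, smul_eq_mul, add_zero,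
    zero_add] at derivative_eq_zero
  linear_combination derivative_eq_zero

theorem IsometryInvariant.momentMap_axial (hμ : IsometryInvariant μ)
    (hW : Integrable (fun y : S2 => (⟪B 1, (y : V)⟫ ^ 2 + ⟪B 2, (y : V)⟫ ^ 2) * ω ⟪B 0, (y : V)⟫) μ)
    (hA : Integrable (fun y : S2 => ⟪B 2, (y : V)⟫ ^ 2 * ω ⟪B 0, (y : V)⟫) μ)
    (hs : Integrable (sinWeight B ω) μ) (α r : ℝ) (k : ℕ) :
    momentMap hW (coord (α • B 0 + r • B 1) ^ k) =
      2 * momentMap hA (coord (α • B 0 + r • B 1) ^ k) +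
        k * r * momentMap hA (coord (α • B 0 + r • B 1) ^ (k - 1) * coord (B 1)) := by
  have hc : Integrable (cosWeight B ω) μ := (hW.sub (hA.const_mul 2)).congr (.of_forall fun y => by
    simp only [Pi.sub_apply, cosWeight]
    ring)
  have cosWeight_eq (φ : C(S2, ℝ)) :
      momentMap hc φ = momentMap hW φ - 2 * momentMap hA φ := by
    simp only [momentMap_apply, ← integral_const_mul]
    rw [← integral_sub (integrable_continuousMap_smul hW φ)
      ((integrable_continuousMap_smul hA φ).const_mul 2)]
    congr 1 with y
    simp only [cosWeight, smul_eq_mul]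
    ring
  have sinWeight_eq (φ : C(S2, ℝ)) :
      momentMap hs (φ * coord (B 2)) = 2 * momentMap hA (φ * coord (B 1)) := by
    simp only [momentMap_apply, smul_eq_mul, ← integral_const_mul]
    congr 1 with y
    simp only [sinWeight, ContinuousMap.mul_apply, coord_apply]
    ring
  have rotation := hμ.two_mul_momentMap_cosWeight hc hs α r k
  rw [cosWeight_eq, sinWeight_eq] at rotation
  linear_combination rotation / 2

theorem sum_inner_frame_sq (B : OrthonormalBasis (Fin 3) ℝ V) (y : S2) :
    ⟪B 0, (y : V)⟫ ^ 2 + ⟪B 1, (y : V)⟫ ^ 2 + ⟪B 2, (y : V)⟫ ^ 2 = 1 := by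
  have := B.sum_sq_inner_right (y : V)
  rwa [Fin.sum_univ_three, norm_eq_of_mem_sphere, one_pow] at this

theorem integrable_mul_axialWeight [IsFiniteMeasure μ] {p : S2 → ℝ} {C : ℝ} (hp : Continuous p)
    (hp_le : ∀ y : S2, |p y| ≤ 1 - ⟪B 0, (y : V)⟫ ^ 2) (hω : Measurable ω)
    (hω_le : ∀ t, |t| ≤ 1 → |(1 - t ^ 2) * ω t| ≤ C) :
    Integrable (fun y : S2 => p y * ω ⟪B 0, (y : V)⟫) μ := by
  have measurable_height : Measurable fun y : S2 => ⟪B 0, (y : V)⟫ := by fun_prop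
  refine Integrable.of_bound (hp.measurable.mul (hω.comp measurable_height)).aestronglyMeasurable C
    (.of_forall fun y => ?_)
  have height_le := (sq_le_one_iff_abs_le_one ⟪B 0, (y : V)⟫).mp
    (by linarith [abs_nonneg (p y), hp_le y])
  calc |p y * ω ⟪B 0, (y : V)⟫| = |p y| * |ω ⟪B 0, (y : V)⟫| := abs_mul _ _
    _ ≤ |1 - ⟪B 0, (y : V)⟫ ^ 2| * |ω ⟪B 0, (y : V)⟫| :=
      mul_le_mul_of_nonneg_right ((hp_le y).trans (le_abs_self _)) (abs_nonneg _)
    _ = |(1 - ⟪B 0, (y : V)⟫ ^ 2) * ω ⟪B 0, (y : V)⟫| := (abs_mul _ _).symm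
    _ ≤ C := hω_le _ height_le

end Azimuthal

/-- The mean of a continuous function with respect to `μ`, as a functional. -/
def mean (μ : Measure S2) [IsFiniteMeasure μ] : C(S2, ℝ) →L[ℝ] ℝ :=
  momentMap (μ := μ) (integrable_const (1 : ℝ))

theorem mean_apply (μ : Measure S2) [IsFiniteMeasure μ] (φ : C(S2, ℝ)) :
    mean μ φ = ∫ y, φ y ∂μ := by
  simp only [mean, momentMap_apply, smul_eq_mul, mul_one]

namespace IsometryInvariant

variable {μ : Measure S2}

theorem mean_frame_pow_add_two [IsFiniteMeasure μ] (hμ : IsometryInvariant μ)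
    (B : OrthonormalBasis (Fin 3) ℝ V) (k : ℕ) :
    mean μ (coord (B 1) ^ (k + 2)) = (k + 1) * mean μ (coord (B 1) ^ k * coord (B 2) ^ 2) := by
  have integrable_of_continuous {p : S2 → ℝ} (hp : Continuous p) : Integrable p μ :=
    hp.integrable_of_hasCompactSupport (.of_compactSpace p)
  have rotation := hμ.momentMap_axial (B := B) (ω := fun _ => 1)
    (integrable_of_continuous (by fun_prop)) (integrable_of_continuous (by fun_prop))
    (integrable_of_continuous (by unfold sinWeight; fun_prop)) 0 1 k
  have lower_degree : (k : ℝ) * mean μ (coord (B 1) ^ (k - 1) * coord (B 1) * coord (B 2) ^ 2) =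
      k * mean μ (coord (B 1) ^ k * coord (B 2) ^ 2) := by
    cases k with
    | zero => simp only [Nat.cast_zero, zero_mul]
    | succ k => rw [add_tsub_cancel_right, pow_succ (coord (B 1))]
  have mean_eq : mean μ (coord (B 1) ^ k * (coord (B 1) ^ 2 + coord (B 2) ^ 2)) =
      2 * mean μ (coord (B 1) ^ k * coord (B 2) ^ 2) +
        k * mean μ (coord (B 1) ^ (k - 1) * coord (B 1) * coord (B 2) ^ 2) := by
    simpa only [momentMap_apply, mean_apply, zero_smul, one_smul, zero_add, mul_one, smul_eq_mul,
      ContinuousMap.mul_apply, ContinuousMap.add_apply, ContinuousMap.pow_apply, coord_apply]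
      using rotation
  rw [lower_degree, mul_add, map_add, ← pow_add] at mean_eq
  linear_combination mean_eq

theorem mean_frame_pow [IsFiniteMeasure μ] (hμ : IsometryInvariant μ)
    (B : OrthonormalBasis (Fin 3) ℝ V) (k : ℕ) :
    mean μ (coord (B 1) ^ k) = (k + 3) * mean μ (coord (B 1) ^ k * coord (B 2) ^ 2) := by
  have swap : mean μ (coord (B 1) ^ k * coord (B 0) ^ 2) =
      mean μ (coord (B 1) ^ k * coord (B 2) ^ 2) := by
    have swap_one : Equiv.swap (0 : Fin 3) 2 1 = 1 := by decide
    simpa [swap_one, mean_apply, coord_apply] using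
      hμ.integral_comp_frame B (B.reindex (Equiv.swap 0 2)) fun v => v 1 ^ k * v 2 ^ 2
  have pow_eq : coord (B 1) ^ k = coord (B 1) ^ k * coord (B 0) ^ 2 + coord (B 1) ^ (k + 2) +
      coord (B 1) ^ k * coord (B 2) ^ 2 := by
    ext y
    simp only [ContinuousMap.add_apply, ContinuousMap.mul_apply, ContinuousMap.pow_apply,
      coord_apply]
    linear_combination -⟪B 1, (y : V)⟫ ^ k * sum_inner_frame_sq B y
  conv_lhs => rw [pow_eq, map_add, map_add, swap, hμ.mean_frame_pow_add_two]
  ring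

theorem mean_coord_pow_two_mul [IsProbabilityMeasure μ] (hμ : IsometryInvariant μ) (a : V)
    (m : ℕ) : (2 * m + 1) * mean μ (coord a ^ (2 * m)) = ‖a‖ ^ (2 * m) := by
  have frame_moment (B : OrthonormalBasis (Fin 3) ℝ V) :
      (2 * m + 1) * mean μ (coord (B 1) ^ (2 * m)) = 1 := by
    induction m with
    | zero => simp [mean_apply]
    | succ m ih =>
      rw [hμ.mean_frame_pow] at ih
      rw [mul_add_one, hμ.mean_frame_pow_add_two]
      push_cast at ih ⊢
      linear_combination ih
  rcases eq_or_ne a 0 with rfl | ha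
  · cases m <;> simp [mean_apply]
  · obtain ⟨B, -, hB, -⟩ := exists_frame_adapted ⟨‖a‖⁻¹ • a, by simp [norm_smul, ha]⟩ 0
    have a_eq : a = ‖a‖ • B.reindex (Equiv.swap 0 1) 1 := by
      simp [hB, smul_smul, ha]
    conv_lhs => rw [a_eq]
    rw [map_smul, smul_pow, map_smul, smul_eq_mul]
    linear_combination ‖a‖ ^ (2 * m) * frame_moment (B.reindex (Equiv.swap 0 1))

end IsometryInvariant

section Azimuth

variable (B : OrthonormalBasis (Fin 3) ℝ V)

/-- The function `sin² φ` in the cylindrical coordinates `(ρ cos φ, ρ sin φ)` around the axis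
`B 0`; it takes the value `0` at the two poles. -/
def sinSqAzimuth (y : S2) : ℝ := ⟪B 2, (y : V)⟫ ^ 2 * (1 - ⟪B 0, (y : V)⟫ ^ 2)⁻¹

variable {B} {μ : Measure S2} [IsFiniteMeasure μ]

theorem integrable_mul_inv_one_sub_sq {p : S2 → ℝ} (hp : Continuous p)
    (hp_le : ∀ y : S2, |p y| ≤ 1 - ⟪B 0, (y : V)⟫ ^ 2) :
    Integrable (fun y : S2 => p y * (1 - ⟪B 0, (y : V)⟫ ^ 2)⁻¹) μ :=
  integrable_mul_axialWeight (ω := fun t => (1 - t ^ 2)⁻¹) (C := 1) hp hp_le (by fun_prop)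
    fun t _ => by
      rcases eq_or_ne (1 - t ^ 2) 0 with h | h
      · simp [h]
      · simp [mul_inv_cancel₀ h]

variable (B μ) in
theorem integrable_sinSqAzimuth : Integrable (sinSqAzimuth B) μ :=
  integrable_mul_inv_one_sub_sq (by fun_prop) fun y => by
    rw [abs_sq]
    linarith [sum_inner_frame_sq B y, sq_nonneg ⟪B 1, (y : V)⟫]

variable (B μ) in
theorem integrable_sinTwoAzimuth : Integrable (sinWeight B fun t => (1 - t ^ 2)⁻¹) μ :=
  integrable_mul_inv_one_sub_sq (by fun_prop) fun y => abs_le.mpr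
    ⟨by linarith [sum_inner_frame_sq B y, sq_nonneg (⟪B 1, (y : V)⟫ + ⟪B 2, (y : V)⟫)],
      by linarith [sum_inner_frame_sq B y, sq_nonneg (⟪B 1, (y : V)⟫ - ⟪B 2, (y : V)⟫)]⟩

namespace IsometryInvariant

theorem ae_height_sq_ne_one (hμ : IsometryInvariant μ) (B : OrthonormalBasis (Fin 3) ℝ V) :
    ∀ᵐ y : S2 ∂μ, 1 - ⟪B 0, (y : V)⟫ ^ 2 ≠ 0 := by
  filter_upwards [hμ.ae_inner_sq_ne (B.orthonormal.ne_zero 0)] with y hy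
  rw [B.norm_eq_one, one_pow] at hy
  exact sub_ne_zero.mpr hy.symm

theorem mean_pow_eq_sinSqAzimuth (hμ : IsometryInvariant μ) (α r : ℝ) (k : ℕ) :
    mean μ (coord (α • B 0 + r • B 1) ^ k) =
      2 * momentMap (integrable_sinSqAzimuth B μ) (coord (α • B 0 + r • B 1) ^ k) +
        k * r * momentMap (integrable_sinSqAzimuth B μ)
          (coord (α • B 0 + r • B 1) ^ (k - 1) * coord (B 1)) := by
  have integrable_total : Integrable (fun y : S2 =>
      (⟪B 1, (y : V)⟫ ^ 2 + ⟪B 2, (y : V)⟫ ^ 2) * (1 - ⟪B 0, (y : V)⟫ ^ 2)⁻¹) μ :=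
    integrable_mul_inv_one_sub_sq (by fun_prop) fun y => by
      rw [abs_of_nonneg (by positivity)]
      linarith [sum_inner_frame_sq B y]
  have rotation := hμ.momentMap_axial (ω := fun t => (1 - t ^ 2)⁻¹) integrable_total
    (integrable_sinSqAzimuth B μ) (integrable_sinTwoAzimuth B μ) α r k
  refine Eq.trans ?_ rotation
  rw [mean_apply, momentMap_apply]
  refine integral_congr_ae ?_
  filter_upwards [hμ.ae_height_sq_ne_one B] with y hy
  rw [show ⟪B 1, (y : V)⟫ ^ 2 + ⟪B 2, (y : V)⟫ ^ 2 = 1 - ⟪B 0, (y : V)⟫ ^ 2 by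
    linarith [sum_inner_frame_sq B y], mul_inv_cancel₀ hy, smul_eq_mul, mul_one]

theorem momentMap_sinTwoAzimuth_eq_zero (hμ : IsometryInvariant μ) (α r : ℝ) (k : ℕ) :
    momentMap (integrable_sinTwoAzimuth B μ) (coord (α • B 0 + r • B 1) ^ k) = 0 := by
  obtain ⟨B', hB'⟩ := exists_frame_reflect B
  have reflection := hμ.integral_comp_frame B B' fun v =>
    (α * v 0 + r * v 1) ^ k * (2 * v 1 * v 2 * (1 - v 0 ^ 2)⁻¹)
  simp only [hB', Matrix.cons_val, inner_neg_left, mul_neg, neg_mul, integral_neg] at reflection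
  simp only [momentMap_apply, sinWeight, smul_eq_mul, ContinuousMap.pow_apply, coord_apply,
    inner_add_left, real_inner_smul_left]
  exact self_eq_neg.mp reflection.symm

end IsometryInvariant

theorem IsometryInvariant.momentMap_sinSqAzimuth {μ : Measure S2} [IsProbabilityMeasure μ]
    (hμ : IsometryInvariant μ) (α r : ℝ) (m : ℕ) :
    (2 * m + 1) * (2 * m + 2) *
        (r ^ 2 * momentMap (integrable_sinSqAzimuth B μ) (coord (α • B 0 + r • B 1) ^ (2 * m))) =
      (α ^ 2 + r ^ 2) ^ (m + 1) - (α ^ 2) ^ (m + 1) := by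
  let A := momentMap (integrable_sinSqAzimuth B μ)
  have norm_sq (r : ℝ) : ‖α • B 0 + r • B 1‖ ^ 2 = α ^ 2 + r ^ 2 := by
    simp [norm_add_sq_real, norm_smul, inner_smul_left, inner_smul_right, B.inner_eq_ite]
  have hasDerivAt_moment (r : ℝ) : HasDerivAt (fun r => A (coord (α • B 0 + r • B 1) ^ (2 * m)))
      ((2 * m) • A (coord (α • B 0 + r • B 1) ^ (2 * m - 1) * coord (B 1))) r := by
    refine hasDerivAt_map_coord_pow A ?_ (2 * m)
    simpa using ((hasDerivAt_id r).smul_const (B 1)).const_add (α • B 0)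
  have hasDerivAt_defect (r : ℝ) : HasDerivAt (fun r : ℝ => (2 * m + 1) * (2 * m + 2) *
      (r ^ 2 * A (coord (α • B 0 + r • B 1) ^ (2 * m))) - (α ^ 2 + r ^ 2) ^ (m + 1)) 0 r := by
    refine ((((hasDerivAt_pow 2 r).mul (hasDerivAt_moment r)).const_mul _).sub
      (((hasDerivAt_pow 2 r).const_add (α ^ 2)).fun_pow (m + 1))).congr_deriv ?_
    have moment := hμ.mean_coord_pow_two_mul (α • B 0 + r • B 1) m
    rw [hμ.mean_pow_eq_sinSqAzimuth, pow_mul ‖_‖, norm_sq] at moment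
    rw [nsmul_eq_mul]
    push_cast at moment ⊢
    linear_combination (2 * m + 2) * r * moment
  have constant := is_const_of_deriv_eq_zero (fun r => (hasDerivAt_defect r).differentiableAt)
    (fun r => (hasDerivAt_defect r).deriv) r 0
  simp only [A] at constant
  linear_combination constant

end Azimuth

section Kernel

theorem mem_plane_iff {x : S2} {v : V} : v ∈ plane x ↔ ⟪(x : V), v⟫ = 0 :=
  mem_orthogonal_singleton_iff_inner_right

theorem inner_self_coe_sphere (x : S2) : ⟪(x : V), x⟫ = 1 := by
  rw [real_inner_self_eq_norm_sq, norm_eq_of_mem_sphere, one_pow]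

theorem Cker_apply (x y : S2) (v : V) : Cker x y v = (cline x y).starProjection v := rfl

theorem Cker_comm (x y : S2) (v : V) : Cker x y v = Cker y x v := by
  simp only [Cker_apply, cline, inf_comm]

theorem norm_Cker_le (x y : S2) (v : V) : ‖Cker x y v‖ ≤ ‖v‖ :=
  norm_starProjection_apply_le _ v

theorem inner_Cker_left (x y : S2) (u v : V) : ⟪Cker y x u, v⟫ = ⟪u, Cker x y v⟫ := by
  rw [Cker_comm]
  exact inner_starProjection_left_eq_right _ u v

theorem Cker_self_right (x y : S2) : Cker x y y = 0 :=
  (cline x y).starProjection_apply_eq_zero_iff.mpr fun v hv => by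
    rw [real_inner_comm]; exact mem_plane_iff.mp hv.2

theorem Cker_eq (x y : S2) (v : V) :
    let z : V := y - ⟪(x : V), y⟫ • x
    Cker x y v = v - ⟪(x : V), v⟫ • (x : V) - (⟪z, v⟫ / (1 - ⟪(x : V), y⟫ ^ 2)) • z := by
  intro z
  have inner_x_z : ⟪(x : V), z⟫ = 0 := by
    simp only [z, inner_sub_right, real_inner_smul_right, inner_self_coe_sphere, mul_one, sub_self]
  have inner_y_z : ⟪(y : V), z⟫ = 1 - ⟪(x : V), y⟫ ^ 2 := by
    simp only [z, inner_sub_right, real_inner_smul_right, inner_self_coe_sphere,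
      real_inner_comm (x : V)]
    ring
  have inner_z_eq (w : V) : ⟪z, w⟫ = ⟪(y : V), w⟫ - ⟪(x : V), y⟫ * ⟪(x : V), w⟫ := by
    simp only [z, inner_sub_left, real_inner_smul_left]
  have cancel : ⟪z, v⟫ / (1 - ⟪(x : V), y⟫ ^ 2) * (1 - ⟪(x : V), y⟫ ^ 2) = ⟪z, v⟫ :=
    div_mul_cancel_of_imp fun h => by
      have : ⟪z, z⟫ = 0 := by rw [inner_z_eq, inner_x_z, inner_y_z, h, mul_zero, sub_zero]
      rw [inner_self_eq_zero.mp this, inner_zero_left]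
  refine eq_starProjection_of_mem_of_inner_eq_zero (K := cline x y)
    ⟨mem_plane_iff.mpr ?_, mem_plane_iff.mpr ?_⟩ fun w hw => ?_
  · simp only [inner_sub_right, real_inner_smul_right, inner_self_coe_sphere, inner_x_z]
    ring
  · rw [inner_sub_right, real_inner_smul_right, inner_y_z, cancel, inner_z_eq, inner_sub_right,
      real_inner_smul_right, real_inner_comm (x : V)]
    ring
  · have hxw := mem_plane_iff.mp hw.1
    rw [sub_sub, sub_sub_cancel, inner_add_left, real_inner_smul_left, real_inner_smul_left,
      inner_z_eq w, hxw, mem_plane_iff.mp hw.2]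
    ring

theorem plane_neg (x : S2) : plane (-x) = plane x := by
  ext v
  rw [mem_plane_iff, mem_plane_iff, coe_neg_sphere, inner_neg_left, neg_eq_zero]

theorem Cker_neg_right (x y : S2) (v : V) : Cker x (-y) v = Cker x y v := by
  simp only [Cker_apply, cline, plane_neg]

theorem starProjection_plane (x : S2) (v : V) :
    (plane x).starProjection v = v - ⟪(x : V), v⟫ • (x : V) := by
  rw [plane, starProjection_orthogonal_val,
    starProjection_unit_singleton ℝ (norm_eq_of_mem_sphere x)]

theorem Cker_starProjection_plane (x y : S2) (v : V) :
    Cker x y ((plane y).starProjection v) = Cker x y v := by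
  rw [starProjection_plane, map_sub, map_smul, Cker_self_right, smul_zero, sub_zero]

theorem measurable_Cker : Measurable fun p : (S2 × S2) × V => Cker p.1.1 p.1.2 p.2 := by
  simp only [Cker_eq, div_eq_mul_inv]
  fun_prop

theorem aestronglyMeasurable_Cker {μ ν : Measure S2} {s : S2 → V}
    (hs : AEStronglyMeasurable s ν) :
    AEStronglyMeasurable (fun p : S2 × S2 => Cker p.1 p.2 (s p.2)) (μ.prod ν) :=
  (measurable_Cker.comp_aemeasurable
    (aemeasurable_id.prodMk hs.comp_snd.aemeasurable)).aestronglyMeasurable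

end Kernel

section GeometricSums

variable {R : Type*} [CommRing R] [Algebra ℝ R]

/-- The divided difference `(q ^ (m + 1) - u ^ (m + 1)) / (q - u) = ∑_{i ≤ m} q ^ (m - i) u ^ i`. -/
def geomSum (q : ℝ) (u : R) : ℕ → R
  | 0 => 1
  | m + 1 => q • geomSum q u m + u ^ (m + 1)

/-- The derivative of `geomSum q u m` with respect to `q`. -/
def geomSumDeriv (q : ℝ) (u : R) : ℕ → R
  | 0 => 0
  | m + 1 => geomSum q u m + q • geomSumDeriv q u m

theorem sub_mul_geomSum (q u : ℝ) (m : ℕ) :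
    (q - u) * geomSum q u m = q ^ (m + 1) - u ^ (m + 1) := by
  induction m with
  | zero => simp only [geomSum, mul_one, zero_add, pow_one]
  | succ m ih =>
    rw [geomSum, smul_eq_mul]
    linear_combination q * ih

theorem sub_mul_geomSumDeriv (q u : ℝ) (m : ℕ) :
    (q - u) * geomSumDeriv q u m = (m + 1) * q ^ m - geomSum q u m := by
  induction m with
  | zero => simp [geomSum, geomSumDeriv]
  | succ m ih =>
    rw [geomSum, geomSumDeriv, smul_eq_mul, smul_eq_mul]
    push_cast
    linear_combination q * ih + sub_mul_geomSum q u m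

theorem map_geomSum {R' : Type*} [CommRing R'] [Algebra ℝ R'] (F : R →ₐ[ℝ] R') (q : ℝ) (u : R)
    (m : ℕ) : F (geomSum q u m) = geomSum q (F u) m := by
  induction m with
  | zero => exact map_one F
  | succ m ih => rw [geomSum, map_add, map_smul, map_pow, ih, geomSum]

theorem map_geomSumDeriv {R' : Type*} [CommRing R'] [Algebra ℝ R'] (F : R →ₐ[ℝ] R') (q : ℝ) (u : R)
    (m : ℕ) : F (geomSumDeriv q u m) = geomSumDeriv q (F u) m := by
  induction m with
  | zero => exact map_zero F
  | succ m ih => rw [geomSumDeriv, map_add, map_smul, map_geomSum, ih, geomSumDeriv]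

variable {E F : Type*} [AddCommGroup E] [Module ℝ E] [FunLike F R E] [LinearMapClass F ℝ R E]
  (Λ : F) (q : ℝ) {u φ : R} {m : ℕ}

theorem map_geomSum_mul (h : ∀ i < m, Λ (u ^ i * φ) = 0) :
    Λ (geomSum q u m * φ) = Λ (u ^ m * φ) := by
  induction m with
  | zero => rw [geomSum, pow_zero]
  | succ m ih =>
    rw [geomSum, add_mul, map_add, smul_mul_assoc, map_smul, ih fun i hi => h i (by omega),
      h m m.lt_succ_self, smul_zero, zero_add]

theorem map_geomSumDeriv_mul (h : ∀ i < m, Λ (u ^ i * φ) = 0) :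
    Λ (geomSumDeriv q u m * φ) = 0 := by
  induction m with
  | zero => rw [geomSumDeriv, zero_mul, map_zero]
  | succ m ih =>
    have h' : ∀ i < m, Λ (u ^ i * φ) = 0 := fun i hi => h i (by omega)
    rw [geomSumDeriv, add_mul, map_add, smul_mul_assoc, map_smul, ih h', map_geomSum_mul Λ q h',
      h m m.lt_succ_self, smul_zero, zero_add]

theorem map_geomSumDeriv_succ_mul (h : ∀ i < m, Λ (u ^ i * φ) = 0) :
    Λ (geomSumDeriv q u (m + 1) * φ) = Λ (u ^ m * φ) := by
  rw [geomSumDeriv, add_mul, map_add, smul_mul_assoc, map_smul, map_geomSumDeriv_mul Λ q h,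
    map_geomSum_mul Λ q h, smul_zero, add_zero]

end GeometricSums

section Zonal

theorem inner_eq_frame_of_inner_zero {B : OrthonormalBasis (Fin 3) ℝ V} {u : V}
    (hu : ⟪B 0, u⟫ = 0) (b : V) : ⟪u, b⟫ = ⟪B 1, u⟫ * ⟪B 1, b⟫ + ⟪B 2, u⟫ * ⟪B 2, b⟫ := by
  rw [← B.sum_inner_mul_inner u b, Fin.sum_univ_three]
  simp only [real_inner_comm _ u, hu, zero_mul, zero_add]

theorem inner_Cker_eq_azimuth {B : OrthonormalBasis (Fin 3) ℝ V} {x y : S2} (hB : B 0 = x)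
    (hy : 1 - ⟪B 0, (y : V)⟫ ^ 2 ≠ 0) {u : V} (hu : ⟪B 0, u⟫ = 0) (b : V) :
    ⟪u, Cker x y b⟫ =
      (⟪B 1, u⟫ * ⟪B 1, b⟫ - ⟪B 2, u⟫ * ⟪B 2, b⟫) * sinSqAzimuth B y +
        ⟪B 2, u⟫ * ⟪B 2, b⟫ -
        (⟪B 1, u⟫ * ⟪B 2, b⟫ + ⟪B 2, u⟫ * ⟪B 1, b⟫) / 2 *
          sinWeight B (fun t => (1 - t ^ 2)⁻¹) y := by
  have inner_frame : ⟪B 1, B 0⟫ = 0 ∧ ⟪B 2, B 0⟫ = 0 :=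
    ⟨B.orthonormal.2 (by decide), B.orthonormal.2 (by decide)⟩
  have inner_y_b : ⟪(y : V), b⟫ - ⟪B 0, (y : V)⟫ * ⟪B 0, b⟫ =
      ⟪B 1, (y : V)⟫ * ⟪B 1, b⟫ + ⟪B 2, (y : V)⟫ * ⟪B 2, b⟫ := by
    rw [← B.sum_inner_mul_inner (y : V) b, Fin.sum_univ_three]
    simp only [real_inner_comm _ (y : V)]
    ring
  have unit := sum_inner_frame_sq B y
  rw [Cker_eq, ← hB]
  simp only [inner_sub_right, inner_sub_left, real_inner_smul_right, real_inner_smul_left,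
    inner_frame, inner_y_b, inner_eq_frame_of_inner_zero hu, sinSqAzimuth, sinWeight]
  field_simp
  linear_combination -⟪B 1, u⟫ * ⟪B 1, b⟫ * unit

theorem IsometryInvariant.integral_frame_pow_mul_inner_Cker {μ : Measure S2} [IsFiniteMeasure μ]
    (hμ : IsometryInvariant μ) {B : OrthonormalBasis (Fin 3) ℝ V} {x : S2} (hB : B 0 = x) {u : V}
    (hu : ⟪B 0, u⟫ = 0) (b : V) (α r : ℝ) (k : ℕ) :
    ∫ y : S2, ⟪α • B 0 + r • B 1, (y : V)⟫ ^ k * ⟪u, Cker x y b⟫ ∂μ =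
      (⟪B 1, u⟫ * ⟪B 1, b⟫ - ⟪B 2, u⟫ * ⟪B 2, b⟫) *
          momentMap (integrable_sinSqAzimuth B μ) (coord (α • B 0 + r • B 1) ^ k) +
        ⟪B 2, u⟫ * ⟪B 2, b⟫ * mean μ (coord (α • B 0 + r • B 1) ^ k) := by
  let f := coord (α • B 0 + r • B 1) ^ k
  let c₁ := ⟪B 1, u⟫ * ⟪B 1, b⟫ - ⟪B 2, u⟫ * ⟪B 2, b⟫
  let c₂ := ⟪B 2, u⟫ * ⟪B 2, b⟫
  let c₃ := (⟪B 1, u⟫ * ⟪B 2, b⟫ + ⟪B 2, u⟫ * ⟪B 1, b⟫) / 2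
  have integrable_sinSq := integrable_continuousMap_smul (integrable_sinSqAzimuth B μ) f
  have integrable_sinTwo := integrable_continuousMap_smul (integrable_sinTwoAzimuth B μ) f
  have integrable_one := integrable_continuousMap_smul (integrable_const (μ := μ) (1 : ℝ)) f
  calc _ = ∫ y, c₁ * (f y • sinSqAzimuth B y) + c₂ * (f y • 1) -
        c₃ * (f y • sinWeight B (fun t => (1 - t ^ 2)⁻¹) y) ∂μ := by
        refine integral_congr_ae ?_
        filter_upwards [hμ.ae_height_sq_ne_one B] with y hy
        rw [inner_Cker_eq_azimuth hB hy hu]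
        simp only [f, c₁, c₂, c₃, ContinuousMap.pow_apply, coord_apply, smul_eq_mul]
        ring
    _ = c₁ * momentMap (integrable_sinSqAzimuth B μ) f + c₂ * mean μ f -
        c₃ * momentMap (integrable_sinTwoAzimuth B μ) f := by
        rw [integral_sub ((integrable_sinSq.const_mul c₁).fun_add (integrable_one.const_mul c₂))
          (integrable_sinTwo.const_mul c₃), integral_add (integrable_sinSq.const_mul c₁)
          (integrable_one.const_mul c₂)]
        simp only [integral_const_mul, mean, momentMap_apply]
    _ = _ := by rw [hμ.momentMap_sinTwoAzimuth_eq_zero, mul_zero, sub_zero]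

theorem IsometryInvariant.integral_pow_mul_inner_Cker {μ : Measure S2} [IsProbabilityMeasure μ]
    (hμ : IsometryInvariant μ) {a : V} {x : S2} (hx : ⟪a, (x : V)⟫ ^ 2 ≠ ‖a‖ ^ 2) {u : V}
    (hu : ⟪(x : V), u⟫ = 0) (b : V) (m : ℕ) :
    (2 * m + 1) * (2 * m + 2) * ∫ y : S2, ⟪a, (y : V)⟫ ^ (2 * m) * ⟪u, Cker x y b⟫ ∂μ =
      (2 * (m + 1) * (‖a‖ ^ 2) ^ m - geomSum (‖a‖ ^ 2) (⟪a, (x : V)⟫ ^ 2) m) * ⟪u, b⟫ -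
        2 * geomSumDeriv (‖a‖ ^ 2) (⟪a, (x : V)⟫ ^ 2) m *
          ((⟪a, b⟫ - ⟪a, (x : V)⟫ * ⟪(x : V), b⟫) * ⟪u, a⟫) := by
  obtain ⟨B, r, hB, ha⟩ := exists_frame_adapted x a
  rw [real_inner_comm, ← hB] at ha
  rw [← hB] at hu hx ⊢
  set α := ⟪a, B 0⟫
  have inner_b : ⟪a, b⟫ - α * ⟪B 0, b⟫ = r * ⟪B 1, b⟫ := by
    conv_lhs => rw [ha, inner_add_left, real_inner_smul_left, real_inner_smul_left]
    ring
  have inner_u : ⟪u, a⟫ = r * ⟪B 1, u⟫ := by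
    rw [ha, inner_add_right, real_inner_smul_right, real_inner_smul_right, real_inner_comm, hu,
      mul_zero, zero_add, real_inner_comm]
  have norm_sq : ‖a‖ ^ 2 = α ^ 2 + r ^ 2 := by
    rw [ha]
    simp [norm_add_sq_real, norm_smul, inner_smul_left, inner_smul_right, B.inner_eq_ite]
  have moment := hμ.mean_coord_pow_two_mul a m
  have azimuthal := hμ.momentMap_sinSqAzimuth (B := B) α r m
  have split := hμ.integral_frame_pow_mul_inner_Cker hB hu b α r (2 * m)
  rw [← ha] at azimuthal split
  have sub_eq : ‖a‖ ^ 2 - α ^ 2 = r ^ 2 := by rw [norm_sq, add_sub_cancel_left]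
  have geomSum_eq := sub_mul_geomSum (‖a‖ ^ 2) (α ^ 2) m
  have geomSumDeriv_eq := sub_mul_geomSumDeriv (‖a‖ ^ 2) (α ^ 2) m
  rw [← norm_sq, ← geomSum_eq, sub_eq, mul_left_comm] at azimuthal
  replace azimuthal := mul_left_cancel₀ (sub_eq ▸ sub_ne_zero.mpr hx.symm) azimuthal
  rw [sub_eq] at geomSumDeriv_eq
  rw [pow_mul ‖a‖] at moment
  rw [split, inner_b, inner_u, inner_eq_frame_of_inner_zero hu]
  linear_combination (⟪B 1, u⟫ * ⟪B 1, b⟫ - ⟪B 2, u⟫ * ⟪B 2, b⟫) * azimuthal +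
    (2 * m + 2) * ⟪B 2, u⟫ * ⟪B 2, b⟫ * moment + 2 * ⟪B 1, b⟫ * ⟪B 1, u⟫ * geomSumDeriv_eq

end Zonal

section Symmetry

variable {μ ν : Measure S2} {g s : S2 → V}

theorem integrable_Cker (hs : Integrable s ν) (x : S2) : Integrable (fun y => Cker x y (s y)) ν :=
  hs.mono (measurable_Cker.comp_aemeasurable
    ((measurable_const.prodMk measurable_id).aemeasurable.prodMk
      hs.aemeasurable)).aestronglyMeasurable (.of_forall fun y => norm_Cker_le x y (s y))

theorem integral_inner_integral_Cker [SFinite μ] [SFinite ν] (hg : Integrable g μ)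
    (hs : Integrable s ν) :
    ∫ x, ⟪g x, ∫ y, Cker x y (s y) ∂ν⟫ ∂μ = ∫ y, ⟪∫ x, Cker y x (g x) ∂μ, s y⟫ ∂ν := by
  have integrable_pairing :
      Integrable (fun p : S2 × S2 => ⟪g p.1, Cker p.1 p.2 (s p.2)⟫) (μ.prod ν) := by
    refine (hg.norm.mul_prod hs.norm).mono
      (hg.aestronglyMeasurable.comp_fst.inner (aestronglyMeasurable_Cker hs.aestronglyMeasurable))
      (.of_forall fun p => ?_)
    rw [norm_mul, norm_norm, norm_norm]
    exact (norm_inner_le_norm _ _).trans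
      (mul_le_mul_of_nonneg_left (norm_Cker_le _ _ _) (norm_nonneg _))
  calc ∫ x, ⟪g x, ∫ y, Cker x y (s y) ∂ν⟫ ∂μ = ∫ x, ∫ y, ⟪g x, Cker x y (s y)⟫ ∂ν ∂μ := by
        simp only [integral_inner (integrable_Cker hs _)]
    _ = ∫ y, ∫ x, ⟪g x, Cker x y (s y)⟫ ∂μ ∂ν := integral_integral_swap integrable_pairing
    _ = ∫ y, ∫ x, ⟪Cker y x (g x), s y⟫ ∂μ ∂ν := by simp only [inner_Cker_left]
    _ = ∫ y, ⟪∫ x, Cker y x (g x) ∂μ, s y⟫ ∂ν := by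
        simp only [real_inner_comm (s _), integral_inner (integrable_Cker hg _)]

end Symmetry

section Polarization

theorem hasDerivAt_add_smul (a b : V) : HasDerivAt (fun t : ℝ => a + t • b) b 0 := by
  simpa using ((hasDerivAt_id (0 : ℝ)).smul_const b).const_add a

theorem map_coord_pow_mul_coord_eq_zero {E : Type*} [NormedAddCommGroup E] [NormedSpace ℝ E]
    {Λ : C(S2, ℝ) →L[ℝ] E} {k : ℕ} (h : ∀ a, Λ (coord a ^ (k + 1)) = 0) (a b : V) :
    Λ (coord a ^ k * coord b) = 0 := by
  have derivative := (hasDerivAt_map_coord_pow Λ (hasDerivAt_add_smul a b) (k + 1)).unique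
    ((hasDerivAt_const (0 : ℝ) (0 : E)).congr_of_eventuallyEq (.of_forall fun t => h _))
  rw [zero_smul, add_zero, Nat.add_sub_cancel, ← Nat.cast_smul_eq_nsmul ℝ] at derivative
  exact (smul_eq_zero.mp derivative).resolve_left (Nat.cast_ne_zero.mpr k.succ_ne_zero)

section EvenMoments

variable {E : Type*} [NormedAddCommGroup E] [NormedSpace ℝ E] {Λ : C(S2, ℝ) →L[ℝ] E} {m : ℕ}

theorem map_geomSum_coord (h : ∀ i ≤ m, ∀ a, Λ (coord a ^ (2 * i)) = 0) (q : ℝ) (a : V) :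
    Λ (geomSum q (coord a ^ 2) (m + 1)) = Λ (coord a ^ (2 * m + 2)) := by
  have lower : ∀ i < m + 1, Λ ((coord a ^ 2) ^ i * 1) = 0 := fun i hi => by
    rw [mul_one, ← pow_mul, h i (Nat.le_of_lt_succ hi)]
  have leading := map_geomSum_mul Λ q lower
  rwa [mul_one, mul_one, ← pow_mul] at leading

theorem map_geomSumDeriv_coord (h : ∀ i ≤ m, ∀ a, Λ (coord a ^ (2 * i)) = 0) (q c : ℝ)
    (a b : V) : Λ (geomSumDeriv q (coord a ^ 2) (m + 1) * (c • 1 - coord a * coord b)) =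
      -Λ (coord a ^ (2 * m + 1) * coord b) := by
  have apply_monomial {i : ℕ} (hi : i ≤ m) :
      Λ ((coord a ^ 2) ^ i * (c • 1 - coord a * coord b)) =
        -Λ (coord a ^ (2 * i + 1) * coord b) := by
    rw [← pow_mul, mul_sub, mul_smul_comm, mul_one, map_sub, map_smul, h i hi, smul_zero,
      zero_sub, ← mul_assoc, ← pow_succ]
  have lower : ∀ i < m, Λ ((coord a ^ 2) ^ i * (c • 1 - coord a * coord b)) = 0 := fun i hi => by
    rw [apply_monomial hi.le, map_coord_pow_mul_coord_eq_zero (k := 2 * i + 1) (h (i + 1) hi),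
      neg_zero]
  rw [map_geomSumDeriv_succ_mul Λ q lower, apply_monomial le_rfl]

end EvenMoments

theorem inner_map_coord_pow_add {Λ : C(S2, ℝ) →L[ℝ] V} {k : ℕ}
    (h : ∀ a, ⟪a, Λ (coord a ^ (k + 1))⟫ = 0) (a b : V) :
    ⟪b, Λ (coord a ^ (k + 1))⟫ + (k + 1) * ⟪a, Λ (coord a ^ k * coord b)⟫ = 0 := by
  have hasDerivAt_line := hasDerivAt_add_smul a b
  have derivative := (hasDerivAt_line.inner ℝ
    (hasDerivAt_map_coord_pow Λ hasDerivAt_line (k + 1))).unique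
    ((hasDerivAt_const (0 : ℝ) (0 : ℝ)).congr_of_eventuallyEq (.of_forall fun t => h _))
  rw [zero_smul, add_zero, Nat.add_sub_cancel, ← Nat.cast_smul_eq_nsmul ℝ,
    real_inner_smul_right] at derivative
  push_cast at derivative
  linear_combination derivative

end Polarization

section Eigensections

theorem inner_momentMap {μ : Measure S2} {s : S2 → V} (hs : Integrable s μ) (φ : C(S2, ℝ))
    (b : V) : ⟪b, momentMap hs φ⟫ = ∫ x, φ x * ⟪s x, b⟫ ∂μ := by
  rw [momentMap_apply, ← integral_inner (integrable_continuousMap_smul hs φ)]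
  simp only [real_inner_smul_right, real_inner_comm b]

/-- `s` is an integrable section of the bundle of planes satisfying `C s = lam • s`; it may be
zero. -/
structure IsEigensection (μ : Measure S2) (lam : ℝ) (s : S2 → V) : Prop where
  integrable : Integrable s μ
  mem_plane : ∀ᵐ x ∂μ, s x ∈ plane x
  eigen : ∀ᵐ x ∂μ, ∫ y, Cker x y (s y) ∂μ = lam • s x

namespace IsEigensection

variable {μ : Measure S2} {lam : ℝ} {s : S2 → V}

theorem mul_inner_momentMap [IsFiniteMeasure μ] (h : IsEigensection μ lam s) (φ : C(S2, ℝ))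
    (b : V) :
    lam * ⟪b, momentMap h.integrable φ⟫ = ∫ y, ∫ x, φ x * ⟪s y, Cker y x b⟫ ∂μ ∂μ := by
  have integrable_g : Integrable (fun x => φ x • b) μ :=
    integrable_continuousMap_smul (integrable_const b) φ
  calc lam * ⟪b, momentMap h.integrable φ⟫ = ∫ x, ⟪φ x • b, lam • s x⟫ ∂μ := by
        simp only [inner_momentMap, real_inner_smul_left, real_inner_smul_right,
          real_inner_comm b, integral_const_mul]
    _ = ∫ x, ⟪φ x • b, ∫ y, Cker x y (s y) ∂μ⟫ ∂μ := integral_congr_ae <| by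
        filter_upwards [h.eigen] with x hx
        rw [hx]
    _ = ∫ y, ⟪∫ x, Cker y x (φ x • b) ∂μ, s y⟫ ∂μ :=
        integral_inner_integral_Cker integrable_g h.integrable
    _ = _ := by
        simp only [real_inner_comm (s _), ← integral_inner (integrable_Cker integrable_g _)]
        simp only [map_smul, real_inner_smul_right]

theorem momentMap_coord_pow_odd_eq_zero [IsFiniteMeasure μ] (hμ : IsometryInvariant μ)
    (h : IsEigensection μ lam s) (hlam : lam ≠ 0) (a : V) (m : ℕ) :
    momentMap h.integrable (coord a ^ (2 * m + 1)) = 0 := by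
  refine ext_inner_left ℝ fun b => ?_
  have inner_integral (y : S2) :
      ∫ x, (coord a ^ (2 * m + 1)) x * ⟪s y, Cker y x b⟫ ∂μ = 0 :=
    hμ.integral_eq_zero_of_odd fun x => by
      rw [Cker_neg_right, ContinuousMap.pow_apply, ContinuousMap.pow_apply, coord_apply,
        coord_apply, coe_neg_sphere, inner_neg_right, (odd_two_mul_add_one m).neg_pow, neg_mul]
  rw [inner_zero_right]
  refine (mul_eq_zero.mp ?_).resolve_left hlam
  rw [h.mul_inner_momentMap]
  simp only [inner_integral, integral_zero]

theorem even_moment_identity [IsProbabilityMeasure μ] (hμ : IsometryInvariant μ)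
    (h : IsEigensection μ lam s) {a : V} (ha : a ≠ 0) (b : V) (m : ℕ) :
    let L := momentMap h.integrable
    let S := geomSum (‖a‖ ^ 2) (coord a ^ 2) m
    let R := geomSumDeriv (‖a‖ ^ 2) (coord a ^ 2) m
    (2 * m + 1) * (2 * m + 2) * (lam * ⟪b, L (coord a ^ (2 * m))⟫) =
      2 * (m + 1) * (‖a‖ ^ 2) ^ m * ⟪b, L 1⟫ - ⟪b, L S⟫ -
        2 * ⟪a, L (R * (⟪a, b⟫ • 1 - coord a * coord b))⟫ := by
  intro L S R
  let P : C(S2, ℝ) := (2 * (m + 1) * (‖a‖ ^ 2) ^ m) • 1 - S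
  let Q : C(S2, ℝ) := R * (⟪a, b⟫ • 1 - coord a * coord b)
  have eval_S (y : S2) : S y = geomSum (‖a‖ ^ 2) (⟪a, (y : V)⟫ ^ 2) m :=
    map_geomSum (ContinuousMap.evalAlgHom ℝ ℝ y) _ _ m
  have eval_R (y : S2) : R y = geomSumDeriv (‖a‖ ^ 2) (⟪a, (y : V)⟫ ^ 2) m :=
    map_geomSumDeriv (ContinuousMap.evalAlgHom ℝ ℝ y) _ _ m
  have pairing (φ : C(S2, ℝ)) (c : V) : Integrable (fun y => φ y * ⟪s y, c⟫) μ :=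
    integrable_continuousMap_smul (h.integrable.inner_const c) φ
  calc _ = ∫ y, (P y * ⟪s y, b⟫ - 2 * (Q y * ⟪s y, a⟫)) ∂μ := by
        rw [h.mul_inner_momentMap, ← integral_const_mul]
        refine integral_congr_ae ?_
        filter_upwards [h.mem_plane, hμ.ae_inner_sq_ne ha] with y hy hay
        have zonal := hμ.integral_pow_mul_inner_Cker hay (mem_plane_iff.mp hy) b m
        simp only [ContinuousMap.pow_apply, coord_apply, zonal, P, Q, eval_S, eval_R,
          ContinuousMap.sub_apply, ContinuousMap.smul_apply, ContinuousMap.mul_apply,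
          ContinuousMap.one_apply, smul_eq_mul, real_inner_comm b]
        ring
    _ = ⟪b, L P⟫ - 2 * ⟪a, L Q⟫ := by
        rw [integral_sub (pairing P b) ((pairing Q a).const_mul 2), integral_const_mul,
          ← inner_momentMap h.integrable, ← inner_momentMap h.integrable]
    _ = _ := by rw [map_sub, map_smul, inner_sub_right, real_inner_smul_right]

theorem momentMap_one_eq_zero [IsProbabilityMeasure μ] (hμ : IsometryInvariant μ)
    (h : IsEigensection μ lam s) (hlam : lam ≠ 1 / 2) : momentMap h.integrable 1 = 0 := by
  obtain ⟨a, ha⟩ := exists_ne (0 : V)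
  refine ext_inner_left ℝ fun b => ?_
  have identity := h.even_moment_identity hμ ha b 0
  simp only [geomSum, geomSumDeriv, mul_zero, pow_zero, zero_mul, map_zero, inner_zero_right,
    Nat.cast_zero] at identity
  rw [inner_zero_right]
  refine (mul_eq_zero.mp (?_ : (lam - 1 / 2) * _ = 0)).resolve_left (sub_ne_zero.mpr hlam)
  linear_combination identity / 2

theorem inner_momentMap_coord_pow_succ [IsProbabilityMeasure μ] (hμ : IsometryInvariant μ)
    (h : IsEigensection μ lam s) {m : ℕ}
    (vanish : ∀ i ≤ m, ∀ a, momentMap h.integrable (coord a ^ (2 * i)) = 0) (a b : V) :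
    (2 * m + 3) * (2 * m + 4) * (lam * ⟪b, momentMap h.integrable (coord a ^ (2 * m + 2))⟫) =
      2 * ⟪a, momentMap h.integrable (coord a ^ (2 * m + 1) * coord b)⟫ -
        ⟪b, momentMap h.integrable (coord a ^ (2 * m + 2))⟫ := by
  obtain rfl | ha := eq_or_ne a 0
  · simp
  have vanish_one : momentMap h.integrable 1 = 0 := by
    simpa only [mul_zero, pow_zero] using vanish 0 m.zero_le a
  have identity := h.even_moment_identity hμ ha b (m + 1)
  simp only [map_geomSum_coord vanish, map_geomSumDeriv_coord vanish, vanish_one, mul_add_one,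
    inner_zero_right, inner_neg_right] at identity
  push_cast at identity
  linear_combination identity

theorem momentMap_coord_pow_even_eq_zero [IsProbabilityMeasure μ] (hμ : IsometryInvariant μ)
    (h : IsEigensection μ lam s) (hlam : 1 / 12 < lam) (h1 : momentMap h.integrable 1 = 0)
    (m : ℕ) (a : V) : momentMap h.integrable (coord a ^ (2 * m)) = 0 := by
  induction m using Nat.strong_induction_on generalizing a with
  | _ m ih =>
  obtain _ | m := m
  · rwa [mul_zero, pow_zero]
  have recurrence := h.inner_momentMap_coord_pow_succ hμ fun i hi => ih i (Nat.lt_succ_of_le hi)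
  have one_lt : 1 < (2 * m + 3) * (2 * m + 4) * lam := by
    have : (12 : ℝ) ≤ (2 * m + 3) * (2 * m + 4) := by nlinarith [m.cast_nonneg (α := ℝ)]
    nlinarith
  have radial (a : V) : ⟪a, momentMap h.integrable (coord a ^ (2 * m + 2))⟫ = 0 := by
    have := recurrence a a
    rw [← pow_succ] at this
    refine (mul_eq_zero.mp ?_).resolve_left (sub_pos.mpr one_lt).ne'
    linear_combination this
  refine ext_inner_left ℝ fun b => ?_
  have polarized := inner_map_coord_pow_add radial a b
  rw [inner_zero_right]
  have coeff_ne : (m + 1) * ((2 * m + 3) * (2 * m + 4) * lam + 1) + 1 ≠ 0 := by positivity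
  refine (mul_eq_zero.mp ?_).resolve_left coeff_ne
  push_cast at polarized
  linear_combination (m + 1) * recurrence a b + polarized

theorem ae_eq_zero [IsProbabilityMeasure μ] (hμ : IsometryInvariant μ)
    (h : IsEigensection μ lam s) (hlam : 1 / 12 < lam) (h1 : momentMap h.integrable 1 = 0) :
    ∀ᵐ x ∂μ, s x = 0 :=
  ae_eq_zero_of_moments_eq_zero h.integrable fun a k => by
    obtain ⟨m, rfl | rfl⟩ := k.even_or_odd'
    · exact h.momentMap_coord_pow_even_eq_zero hμ hlam h1 m a
    · exact h.momentMap_coord_pow_odd_eq_zero hμ (by linarith) a m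

end IsEigensection

end Eigensections

section TangentialSections

variable {μ : Measure S2}

theorem IsometryInvariant.integral_Cker [IsProbabilityMeasure μ] (hμ : IsometryInvariant μ)
    (x : S2) (b : V) : ∫ y, Cker x y b ∂μ = (1 / 2 : ℝ) • (plane x).starProjection b := by
  obtain ⟨B, -, hB, -⟩ := exists_frame_adapted x 0
  have off_axis : ⟪B 1, (x : V)⟫ ^ 2 ≠ ‖B 1‖ ^ 2 := by
    rw [← hB, B.orthonormal.2 (by decide), B.orthonormal.1]
    norm_num
  refine ext_inner_left ℝ fun u => ?_
  have project (y : S2) : ⟪u, Cker x y b⟫ = ⟪(plane x).starProjection u, Cker x y b⟫ := by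
    rw [← inner_Cker_left, ← inner_Cker_left, Cker_starProjection_plane]
  have zonal := hμ.integral_pow_mul_inner_Cker off_axis
    (mem_plane_iff.mp (starProjection_apply_mem (plane x) u)) b 0
  simp only [geomSum, geomSumDeriv, mul_zero, pow_zero, one_mul, zero_mul, Nat.cast_zero, ← project,
    inner_starProjection_left_eq_right] at zonal
  rw [← integral_inner (integrable_Cker (integrable_const b) x), real_inner_smul_right]
  linear_combination zonal / 2

/-- The continuous section `x ↦ v - ⟪x, v⟫ x` of the bundle of planes obtained by projecting a fixed
vector `v` onto every plane. -/
def tangentialField : V →ₗ[ℝ] C(S2, V) where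
  toFun v := ⟨fun x => (plane x).starProjection v, by
    simp only [starProjection_plane]
    fun_prop⟩
  map_add' v w := by ext1 x; exact map_add (plane x).starProjection v w
  map_smul' c v := by ext1 x; exact map_smul (plane x).starProjection c v

theorem coeFn_toLp_tangentialField [IsFiniteMeasure μ] (v : V) :
    ∀ᵐ x ∂μ, ContinuousMap.toLp 2 μ ℝ (tangentialField v) x = (plane x).starProjection v :=
  ContinuousMap.coeFn_toLp μ (tangentialField v)

/-- The class in `H` of `tangentialField v`. These sections form the top eigenspace of `C`. -/
def tangentialSection (μ : Measure S2) [IsFiniteMeasure μ] : V →ₗ[ℝ] Hsub μ :=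
  LinearMap.codRestrict (Hsub μ)
    ((ContinuousMap.toLp 2 μ ℝ : C(S2, V) →L[ℝ] Lp V 2 μ).toLinearMap ∘ₗ tangentialField)
    fun v => by
      filter_upwards [coeFn_toLp_tangentialField v] with x hx
      exact hx ▸ starProjection_apply_mem (plane x) v

theorem coeFn_tangentialSection [IsFiniteMeasure μ] (v : V) :
    ∀ᵐ x ∂μ, (tangentialSection μ v : Lp V 2 μ) x = (plane x).starProjection v :=
  coeFn_toLp_tangentialField v

theorem IsometryInvariant.tangentialSection_injective [IsProbabilityMeasure μ]
    (hμ : IsometryInvariant μ) : Function.Injective (tangentialSection μ) := by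
  refine (injective_iff_map_eq_zero _).mpr fun v hv => by_contra fun hv0 => ?_
  have coeFn_eq := coeFn_tangentialSection (μ := μ) v
  rw [hv] at coeFn_eq
  obtain ⟨x, hx, hx0, hxv⟩ :=
    (coeFn_eq.and ((Lp.coeFn_zero V 2 μ).and (hμ.ae_inner_sq_ne hv0))).exists
  have parallel : v - ⟪(x : V), v⟫ • (x : V) = 0 := by
    rw [← starProjection_plane, ← hx]
    exact hx0
  refine hxv ?_
  conv_rhs => rw [sub_eq_zero.mp parallel]
  rw [norm_smul, norm_eq_of_mem_sphere, mul_one, Real.norm_eq_abs, sq_abs, real_inner_comm]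

end TangentialSections

section Spectrum

variable {μ : Measure S2} {lam : ℝ} {C : Hsub μ →L[ℝ] Hsub μ}

/-- `C` is the common lines operator, the integral operator on `H` with kernel `Cker`. -/
def IsCommonLinesOperator (C : Hsub μ →L[ℝ] Hsub μ) : Prop :=
  ∀ s : Hsub μ, ∀ᵐ x ∂μ, (C s : Lp V 2 μ) x = ∫ y, Cker x y ((s : Lp V 2 μ) y) ∂μ

/-- The vector-valued integral of a section in `H`. -/
def sectionIntegral (μ : Measure S2) [IsFiniteMeasure μ] : Hsub μ →ₗ[ℝ] V where
  toFun s := ∫ x, (s : Lp V 2 μ) x ∂μ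
  map_add' s t := by
    have hs := (Lp.memLp (s : Lp V 2 μ)).integrable one_le_two
    have ht := (Lp.memLp (t : Lp V 2 μ)).integrable one_le_two
    exact (integral_congr_ae (Lp.coeFn_add _ _)).trans (integral_add hs ht)
  map_smul' c s := (integral_congr_ae (Lp.coeFn_smul c _)).trans (integral_smul c _)

namespace IsCommonLinesOperator

theorem isEigensection [IsFiniteMeasure μ] (hC : IsCommonLinesOperator C) {s : Hsub μ}
    (hs : C s = lam • s) : IsEigensection μ lam (s : Lp V 2 μ) where
  integrable := (Lp.memLp _).integrable one_le_two
  mem_plane := s.2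
  eigen := by
    filter_upwards [hC s, Lp.coeFn_smul lam (s : Lp V 2 μ)] with x hx hsmul
    rw [← hx, hs]
    exact hsmul

theorem eq_zero_of_sectionIntegral_eq_zero [IsProbabilityMeasure μ]
    (hC : IsCommonLinesOperator C) (hμ : IsometryInvariant μ) {s : Hsub μ} (hs : C s = lam • s)
    (hlam : 1 / 12 < lam) (h0 : sectionIntegral μ s = 0) : s = 0 := by
  have eigensection := hC.isEigensection hs
  refine Subtype.ext (Lp.eq_zero_iff_ae_eq_zero.mpr (eigensection.ae_eq_zero hμ hlam ?_))
  rwa [momentMap_one]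

theorem eigenvalue_le [IsProbabilityMeasure μ] (hC : IsCommonLinesOperator C)
    (hμ : IsometryInvariant μ) (hlam : Module.End.HasEigenvalue (C : Hsub μ →ₗ[ℝ] Hsub μ) lam)
    (hne : lam ≠ 1 / 2) : lam ≤ 1 / 12 := by
  obtain ⟨s, hs⟩ := hlam.exists_hasEigenvector
  by_contra! hlt
  refine hs.2 (hC.eq_zero_of_sectionIntegral_eq_zero hμ hs.apply_eq_smul hlt ?_)
  have := (hC.isEigensection hs.apply_eq_smul).momentMap_one_eq_zero hμ hne
  rwa [momentMap_one] at this

theorem apply_tangentialSection [IsProbabilityMeasure μ] (hC : IsCommonLinesOperator C)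
    (hμ : IsometryInvariant μ) (v : V) :
    C (tangentialSection μ v) = (1 / 2 : ℝ) • tangentialSection μ v := by
  refine Subtype.ext (Lp.ext ?_)
  filter_upwards [hC (tangentialSection μ v), coeFn_tangentialSection (μ := μ) v,
    Lp.coeFn_smul (1 / 2 : ℝ) (tangentialSection μ v : Lp V 2 μ)] with x hCx hx hsmul
  refine Eq.trans ?_ hsmul.symm
  rw [Pi.smul_apply, hx, hCx, ← hμ.integral_Cker]
  refine integral_congr_ae ?_
  filter_upwards [coeFn_tangentialSection (μ := μ) v] with y hy
  rw [hy, Cker_starProjection_plane]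

theorem finrank_eigenspace_half [IsProbabilityMeasure μ] (hC : IsCommonLinesOperator C)
    (hμ : IsometryInvariant μ) :
    Module.finrank ℝ (Module.End.eigenspace (C : Hsub μ →ₗ[ℝ] Hsub μ) (1 / 2 : ℝ)) = 3 := by
  let E := Module.End.eigenspace (C : Hsub μ →ₗ[ℝ] Hsub μ) (1 / 2 : ℝ)
  let fromV : V →ₗ[ℝ] E := (tangentialSection μ).codRestrict E fun v =>
    Module.End.mem_eigenspace_iff.mpr (hC.apply_tangentialSection hμ v)
  let toV : E →ₗ[ℝ] V := sectionIntegral μ ∘ₗ E.subtype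
  have fromV_injective : Function.Injective fromV := fun v w h =>
    hμ.tangentialSection_injective (congrArg Subtype.val h)
  have toV_injective : Function.Injective toV :=
    (injective_iff_map_eq_zero _).mpr fun s h0 => Subtype.ext <|
      hC.eq_zero_of_sectionIntegral_eq_zero hμ (Module.End.mem_eigenspace_iff.mp s.2)
        (by norm_num) h0
  have : FiniteDimensional ℝ E := .of_injective toV toV_injective
  have finrank_V : Module.finrank ℝ V = 3 := finrank_euclideanSpace_fin
  exact le_antisymm
    ((LinearMap.finrank_le_finrank_of_injective toV_injective).trans_eq finrank_V)
    (finrank_V.symm.trans_le (LinearMap.finrank_le_finrank_of_injective fromV_injective))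

end IsCommonLinesOperator

end Spectrum

/-- The largest eigenvalue of the common lines operator `C` is `1/2`, its
eigenspace is `3`-dimensional, and every other eigenvalue `λ` of `C` satisfies `λ ≤ 1/12`;
in particular there is a spectral gap of `1/2 - 1/12 = 5/12` separating the maximal
eigenvalue from the rest of the spectrum. -/
theorem common_lines_operator_spectral_gap
    (μ : Measure S2) [IsProbabilityMeasure μ]
    (hμ : ∀ g : V ≃ₗᵢ[ℝ] V, MeasurePreserving (sphereMap g) μ μ)
    (Cop : Hsub μ →L[ℝ] Hsub μ)
    (hC : ∀ s : Hsub μ, ∀ᵐ x ∂μ,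
      ((Cop s : Lp V 2 μ) : S2 → V) x = ∫ y, Cker x y (((s : Lp V 2 μ) : S2 → V) y) ∂μ) :
    Module.End.HasEigenvalue (Cop : Hsub μ →ₗ[ℝ] Hsub μ) (1 / 2) ∧
    (∀ lam : ℝ, Module.End.HasEigenvalue (Cop : Hsub μ →ₗ[ℝ] Hsub μ) lam → lam ≤ 1 / 2) ∧
    Module.finrank ℝ
      (Module.End.eigenspace (Cop : Hsub μ →ₗ[ℝ] Hsub μ) (1 / 2 : ℝ)) = 3 ∧
    (∀ lam : ℝ, Module.End.HasEigenvalue (Cop : Hsub μ →ₗ[ℝ] Hsub μ) lam →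
      lam ≠ 1 / 2 → lam ≤ 1 / 12) := by
  have finrank_half := IsCommonLinesOperator.finrank_eigenspace_half hC hμ
  have gap (lam : ℝ) (h : Module.End.HasEigenvalue (Cop : Hsub μ →ₗ[ℝ] Hsub μ) lam)
      (hne : lam ≠ 1 / 2) : lam ≤ 1 / 12 := IsCommonLinesOperator.eigenvalue_le hC hμ h hne
  refine ⟨?_, fun lam h => ?_, finrank_half, gap⟩
  · refine Module.End.hasEigenvalue_iff.mpr fun eigenspace_eq_bot => ?_
    rw [eigenspace_eq_bot, finrank_bot] at finrank_half
    exact absurd finrank_half (by norm_num)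
  · obtain rfl | hne := eq_or_ne lam (1 / 2)
    · exact le_rfl
    · linarith [gap lam h hne]
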